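/- Let G be a finite group, N a normal subgroup of G, and suppose χ ∈ Irr(G) is such that the restriction of χ to N is a nontrivial irreducible character of N. Then T(G, N) ≥ χ(1)·T(G/N), where T(G, N) is the sum of the degrees of the irreducible characters of G whose kernel does not contain N, and T(G/N) is the sum of the degrees of the irreducible characters of G/N. -/

import Mathlib

/-- `χ : G → ℂ` is an irreducible complex character of the group `G`, i.e. the character
of a simple (irreducible) finite-dimensional complex representation of `G`. -/
def IsIrrChar (G : Type) [Group G] (χ : G → ℂ) : Prop :=
  ∃ V : FDRep ℂ G, CategoryTheory.Simple V ∧ χ = V.character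

/-- `T(G)`: the sum of the degrees (values at the identity) of the complex irreducible
characters of `G`. -/
noncomputable def charDegreeSum (G : Type) [Group G] : ℝ :=
  ∑ᶠ χ ∈ {χ : G → ℂ | IsIrrChar G χ}, (χ 1).re

/-- `T(G, N)`: the sum of the degrees of the complex irreducible characters of `G` whose
kernel does not contain `N` (`χ` has `g` in its kernel iff `χ g = χ 1`). -/
noncomputable def relCharDegreeSum (G : Type) [Group G] (N : Subgroup G) : ℝ :=
  ∑ᶠ χ ∈ {χ : G → ℂ | IsIrrChar G χ ∧ ∃ n ∈ N, χ n ≠ χ 1}, (χ 1).re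

open CategoryTheory in
theorem coset_norm_sum {G : Type} [Group G] (N : Subgroup G) [Fintype N] (V : FDRep ℂ G)
    (hN : ∑ n : N, V.character n * V.character (n : G)⁻¹ = Nat.card N) (hd : V.character 1 ≠ 0)
    (g : G) :
    ∑ n : N, V.character (g * n) * V.character (g * n)⁻¹ = Nat.card N := by
  set W := Representation.linHom V.ρ V.ρ with hW
  have hchar : ∀ x : G, V.character x * V.character x⁻¹ =
      LinearMap.trace ℂ (V →ₗ[ℂ] V) (W x) := by
    intro x
    rw [mul_comm]
    exact (FDRep.char_linHom V V x).symm
  set S : (V →ₗ[ℂ] V) →ₗ[ℂ] (V →ₗ[ℂ] V) := ∑ n : N, W n with hS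
  let WN : Representation ℂ N (V →ₗ[ℂ] V) := W.comp N.subtype
  have hinvt : Invertible (Nat.card N : ℂ) :=
    invertibleOfNonzero (by exact_mod_cast Nat.card_pos.ne')
  have hfin : Module.finrank ℂ WN.invariants = 1 := by
    have h := FDRep.average_char_eq_finrank_invariants (FDRep.of WN)
    have h2 : ∑ n : N, (FDRep.of WN).character n = Nat.card N := by
      rw [← hN]
      refine Finset.sum_congr rfl fun n _ => ?_
      rw [hchar]; rfl
    rw [h2, inv_mul_cancel_of_invertible] at h
    exact_mod_cast h.symm
  have hid : ∀ x : G, W x LinearMap.id = LinearMap.id := by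
    intro x
    ext v
    simp [hW, Representation.linHom_apply, ← Module.End.mul_apply, ← map_mul]
  have hne : (LinearMap.id : V →ₗ[ℂ] V) ≠ 0 := by
    intro h0
    apply hd
    have : V.ρ 1 = 0 := by rw [map_one]; exact h0
    simp [FDRep.character, this]
  have hSinv : ∀ f, S f ∈ WN.invariants := by
    intro f h
    simp only [hS, LinearMap.sum_apply, map_sum]
    refine Fintype.sum_equiv (Equiv.mulLeft h) _ _ fun n => ?_
    simp [WN, ← Module.End.mul_apply]
  have hscal : ∀ f, ∃ c : ℂ, S f = c • LinearMap.id := by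
    intro f
    obtain ⟨c, hc⟩ := (finrank_eq_one_iff_of_nonzero'
      (⟨LinearMap.id, fun n => hid n⟩ : WN.invariants)
      (by intro h; exact hne (congrArg Subtype.val h))).1 hfin ⟨S f, hSinv f⟩
    exact ⟨c, (congrArg Subtype.val hc).symm⟩
  have hgS : W g * S = S := by
    ext1 f
    obtain ⟨c, hc⟩ := hscal f
    rw [Module.End.mul_apply, hc, map_smul, hid]
  calc _ = LinearMap.trace ℂ _ (W g * S) := by
        rw [hS, Finset.mul_sum, map_sum]
        refine Finset.sum_congr rfl fun n _ => ?_
        rw [hchar, map_mul]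
    _ = LinearMap.trace ℂ _ S := by rw [hgS]
    _ = _ := by
        rw [hS, map_sum, ← hN]
        exact Finset.sum_congr rfl fun n _ => (hchar n).symm

theorem sum_quotient_mul {G : Type} [Group G] [Fintype G] (N : Subgroup G)
    [Fintype N] [Fintype (G ⧸ N)] (F : G ⧸ N → ℂ) (h : G → ℂ)
    (hh : ∀ g, ∑ n : N, h (g * n) = Nat.card N) :
    ∑ g : G, F g * h g = Nat.card N * ∑ q, F q := by
  have hmk : ∀ (q : G ⧸ N) (n : N), ((q.out * n : G) : G ⧸ N) = q := by
    intro q n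
    rw [QuotientGroup.mk_mul_of_mem _ n.2]
    exact Quotient.out_eq' q
  have hbij : Function.Bijective (fun p : (G ⧸ N) × N => p.1.out * (p.2 : G)) := by
    constructor
    · rintro ⟨q, n⟩ ⟨q', n'⟩ h
      have hq : q = q' := by
        rw [← hmk q n, ← hmk q' n']
        exact congrArg _ h
      subst hq
      have hn : n = n' := Subtype.ext (mul_left_cancel h)
      rw [hn]
    · intro g
      refine ⟨⟨(g : G ⧸ N), ⟨(g : G ⧸ N).out⁻¹ * g, ?_⟩⟩, by simp⟩
      rw [← QuotientGroup.eq]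
      exact Quotient.out_eq' _
  rw [← Fintype.sum_bijective _ hbij (fun p => F ((p.1.out * (p.2 : G) : G) : G ⧸ N) *
    h (p.1.out * (p.2 : G))) _ (fun _ => rfl), Fintype.sum_prod_type, Finset.mul_sum]
  refine Finset.sum_congr rfl fun q _ => ?_
  simp_rw [hmk]
  rw [← Finset.mul_sum, hh, mul_comm]

/-- Orthogonality for irreducible characters. -/
theorem irrChar_orth {G : Type} [Group G] [Fintype G] {χ ψ : G → ℂ} (hχ : IsIrrChar G χ)
    (hψ : IsIrrChar G ψ) (hne : χ ≠ ψ) : ∑ g, χ g * ψ g⁻¹ = 0 := by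
  classical
  obtain ⟨V, hV, rfl⟩ := hχ
  obtain ⟨W, hW, rfl⟩ := hψ
  have hinvt : Invertible (Nat.card G : ℂ) :=
    invertibleOfNonzero (by exact_mod_cast Nat.card_pos.ne')
  have h := FDRep.char_orthonormal V W
  rw [if_neg (fun ⟨i⟩ => hne (FDRep.char_iso i))] at h
  exact (mul_eq_zero.1 h).resolve_left (inv_ne_zero (by exact_mod_cast Nat.card_pos.ne'))

theorem irrChar_norm {G : Type} [Group G] [Fintype G] {χ : G → ℂ} (hχ : IsIrrChar G χ) :
    ∑ g, χ g * χ g⁻¹ = Nat.card G := by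
  obtain ⟨V, hV, rfl⟩ := hχ
  exact (FDRep.simple_iff_char_is_norm_one V).1 hV

theorem irrChar_finite (G : Type) [Group G] [Finite G] : {χ : G → ℂ | IsIrrChar G χ}.Finite := by
  classical
  have := Fintype.ofFinite G
  have hli : LinearIndependent ℂ ((↑) : {χ : G → ℂ | IsIrrChar G χ} → (G → ℂ)) := by
    rw [linearIndependent_iff']
    intro s c hc i hi
    have h1 : ∑ g, (∑ j ∈ s, c j • (j : G → ℂ)) g * (i : G → ℂ) g⁻¹ = 0 := by rw [hc]; simp
    simp only [Finset.sum_apply, Pi.smul_apply, smul_eq_mul, Finset.sum_mul] at h1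
    rw [Finset.sum_comm, Finset.sum_eq_single_of_mem i hi] at h1
    · simp only [mul_assoc] at h1
      rw [← Finset.mul_sum, irrChar_norm i.2] at h1
      exact (mul_eq_zero.1 h1).resolve_right (by exact_mod_cast Nat.card_pos.ne')
    · intro j _ hj
      simp only [mul_assoc]
      rw [← Finset.mul_sum, irrChar_orth j.2 i.2 (fun h => hj (Subtype.ext h)), mul_zero]
  exact hli.setFinite

theorem irrChar_one {G : Type} [Group G] [Finite G] {χ : G → ℂ} (hχ : IsIrrChar G χ) :
    ∃ d : ℕ, 0 < d ∧ χ 1 = d := by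
  have := Fintype.ofFinite G
  have hn := irrChar_norm hχ
  obtain ⟨V, hV, rfl⟩ := hχ
  refine ⟨Module.finrank ℂ V, ?_, FDRep.char_one V⟩
  rw [Nat.pos_iff_ne_zero]
  intro h0
  have hs : Subsingleton V := Module.finrank_zero_iff.1 h0
  have hz : ∀ g, V.character g = 0 := by
    intro g
    have : V.ρ g = 0 := Subsingleton.elim _ _
    simp [FDRep.character, this]
  simp only [hz, mul_zero, Finset.sum_const_zero] at hn
  exact Nat.card_pos.ne' (by exact_mod_cast hn.symm : Nat.card G = 0)

theorem rel_degree_sum_ge_of_irreducible_restriction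
    (G : Type) [Group G] [Finite G] (N : Subgroup G) [N.Normal]
    (χ : G → ℂ) (hχ : IsIrrChar G χ)
    (hres : IsIrrChar N (fun n : N => χ ↑n))
    (hnontriv : (fun n : N => χ ↑n) ≠ (fun _ => 1)) :
    (χ 1).re * charDegreeSum (G ⧸ N) ≤ relCharDegreeSum G N := by
  classical
  have := Fintype.ofFinite G
  have := Fintype.ofFinite N
  have := Fintype.ofFinite (G ⧸ N)
  obtain ⟨d, hd, hχ1⟩ := irrChar_one hχ
  have hcoset : ∀ g, ∑ n : N, χ (g * n) * χ (g * n)⁻¹ = Nat.card N := by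
    have hn := irrChar_norm hres
    obtain ⟨V, hV, rfl⟩ := hχ
    exact coset_norm_sum N V hn (by rw [hχ1]; exact_mod_cast hd.ne')
  have hip : ∀ α β : G ⧸ N → ℂ, ∑ g : G, (α g * χ g) * (β (g⁻¹ : G) * χ g⁻¹) =
      Nat.card N * ∑ q, α q * β q⁻¹ := by
    intro α β
    rw [← sum_quotient_mul N (fun q => α q * β q⁻¹) (fun g => χ g * χ g⁻¹) hcoset]
    refine Finset.sum_congr rfl fun g _ => ?_
    rw [QuotientGroup.mk_inv]
    ring
  have hcard : (Nat.card G : ℂ) = Nat.card N * Nat.card (G ⧸ N) := by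
    rw [N.card_eq_card_quotient_mul_card_subgroup]; push_cast; ring
  have hN0 : (Nat.card N : ℂ) ≠ 0 := by exact_mod_cast Nat.card_pos.ne'
  have hQ0 : (Nat.card (G ⧸ N) : ℂ) ≠ 0 := by exact_mod_cast Nat.card_pos.ne'
  let Φ : (G ⧸ N → ℂ) → (G → ℂ) := fun β g => β g * χ g
  have hirr : ∀ β, IsIrrChar (G ⧸ N) β → IsIrrChar G (Φ β) := by
    intro β hβ
    have hn := irrChar_norm hβ
    have hip' := hip β β
    rw [hn, ← hcard] at hip'
    obtain ⟨V, hV, rfl⟩ := hχ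
    obtain ⟨B, hB, rfl⟩ := hβ
    let B' : FDRep ℂ G := FDRep.of (B.ρ.comp (QuotientGroup.mk' N))
    let X : FDRep ℂ G := CategoryTheory.MonoidalCategoryStruct.tensorObj B' V
    have hX : Φ B.character = X.character := by
      rw [FDRep.char_tensor]; rfl
    refine ⟨X, ?_, hX⟩
    rw [FDRep.simple_iff_char_is_norm_one, ← hX]
    exact hip'
  have hinj : Set.InjOn Φ {β | IsIrrChar (G ⧸ N) β} := by
    intro α hα β hβ hab
    by_contra hne
    have h1 := hip α β
    rw [irrChar_orth hα hβ hne, mul_zero] at h1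
    have h2 := irrChar_norm (hirr β hβ)
    have h3 : ∑ g, Φ β g * Φ β g⁻¹ = ∑ g, Φ α g * Φ β g⁻¹ := by rw [hab]
    rw [h3] at h2
    rw [show ∑ g, Φ α g * Φ β g⁻¹ = 0 from h1] at h2
    exact Nat.card_pos.ne' (by exact_mod_cast h2.symm : Nat.card G = 0)
  have hker : ∃ n ∈ N, χ n ≠ χ 1 := by
    by_contra! hcon
    apply hnontriv
    have hn := irrChar_norm hres
    have hc : ∀ n : N, χ n = d := fun n => (hcon n n.2).trans hχ1
    simp only [hc, Finset.sum_const, Finset.card_univ, nsmul_eq_mul, ← Nat.card_eq_fintype_card] at hn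
    have hdd : d * d = 1 := by
      have : (Nat.card N : ℂ) * (d * d) = Nat.card N * 1 := by rw [mul_one]; exact hn
      exact_mod_cast mul_left_cancel₀ hN0 this
    have hd1 : d = 1 := Nat.eq_one_of_mul_eq_one_left hdd
    funext n
    rw [hc, hd1, Nat.cast_one]
  have hfinR : {ψ : G → ℂ | IsIrrChar G ψ ∧ ∃ n ∈ N, ψ n ≠ ψ 1}.Finite :=
    (irrChar_finite G).subset fun _ h => h.1
  have hfinQ := irrChar_finite (G ⧸ N)
  unfold charDegreeSum relCharDegreeSum
  rw [finsum_mem_eq_finite_toFinset_sum _ hfinR, finsum_mem_eq_finite_toFinset_sum _ hfinQ,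
    Finset.mul_sum]
  calc _ = ∑ β ∈ hfinQ.toFinset, (Φ β 1).re := by
        refine Finset.sum_congr rfl fun β hβ => ?_
        simp only [Φ, hχ1, QuotientGroup.mk_one]
        simp [mul_comm]
    _ = ∑ ψ ∈ hfinQ.toFinset.image Φ, (ψ 1).re := by
        rw [Finset.sum_image]
        simpa using hinj
    _ ≤ _ := by
        refine Finset.sum_le_sum_of_subset_of_nonneg ?_ ?_
        · intro ψ hψ
          simp only [Finset.mem_image, Set.Finite.mem_toFinset, Set.mem_setOf_eq] at hψ ⊢
          obtain ⟨β, hβ, rfl⟩ := hψ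
          refine ⟨hirr β hβ, ?_⟩
          obtain ⟨n, hn, hne⟩ := hker
          refine ⟨n, hn, ?_⟩
          obtain ⟨e, he, hβ1⟩ := irrChar_one hβ
          simp only [Φ, (QuotientGroup.eq_one_iff n).2 hn, QuotientGroup.mk_one, hβ1]
          exact fun h => hne (mul_left_cancel₀ (by exact_mod_cast he.ne') h)
        · intro ψ hψ _
          simp only [Set.Finite.mem_toFinset, Set.mem_setOf_eq] at hψ
          obtain ⟨e, he, h1⟩ := irrChar_one hψ.1
          rw [h1]; simp
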